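/- For every integer k ≥ 74 and every real r with 0 < r ≤ 2^(k-1)·ln 2, the following hold: g_r(α) < g_r(1/2) for every α ∈ (1/2, 0.9], and g_r''(1/2) < 0. -/

import Mathlib

/-- The correlation function for NAE `k`-SAT:
`f_N(α) = 1 - 2^(2-k) + 2^(1-k) (α^k + (1-α)^k)`. -/
noncomputable def fN (k : ℕ) (α : ℝ) : ℝ :=
  1 - (2 : ℝ) ^ ((2 : ℤ) - k) + (2 : ℝ) ^ ((1 : ℤ) - k) * (α ^ k + (1 - α) ^ k)

/-- `g_r(α) = f_N(α)^r / (α^α (1-α)^(1-α))`, with the `0^0 = 1` convention of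
`Real.rpow` at the endpoints. -/
noncomputable def gr (k : ℕ) (r : ℝ) (α : ℝ) : ℝ :=
  fN k α ^ r / (α ^ α * (1 - α) ^ (1 - α))

/-!
The function `log g_r = r log f_N + H`, with `H` the binary entropy, is symmetric about `1/2`, so
`1/2` is a critical point. Its second derivative is
`r (f_N'' / f_N - (f_N' / f_N)²) - 1 / (α (1 - α))`, where `1 / (α (1 - α)) ≥ 4`, while for
`α ∈ [1/10, 9/10]` the bound on `r` gives `r f_N'' ≤ 2 (log 2) k (k - 1) (9/10)^(k - 2)`. Exactly
from `k = 74` on, the last quantity is below `4 (1 - 2^(2-k)) ≤ 4 f_N`, so `log g_r` is strictly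
concave on `[1/10, 9/10]` and both claims follow.
-/

open Real Set Filter Topology

section Calculus

variable {f : ℝ → ℝ} {x : ℝ}

lemma deriv_eq_zero_of_reflection_invariant (hf : ∀ y, f (2 * x - y) = f y) : deriv f x = 0 := by
  have hneg : deriv f x = -deriv f (2 * x - x) := by
    rw [← deriv_comp_const_sub, funext hf]
  rw [two_mul, add_sub_cancel_right] at hneg
  linarith

lemma lt_of_strictConcaveOn_of_hasDerivAt_zero {s : Set ℝ} {y : ℝ} (hf : StrictConcaveOn ℝ s f)
    (hx : x ∈ s) (hy : y ∈ s) (hyx : y ≠ x) (hfx : HasDerivAt f 0 x) : f y < f x := by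
  rcases hyx.lt_or_gt with hlt | hgt
  · have hslope := hf.lt_slope_of_hasDerivAt hy hx hlt hfx
    rwa [slope_pos_iff_of_le hlt.le] at hslope
  · have hslope := hf.slope_lt_of_hasDerivAt hx hy hgt hfx
    rwa [slope_neg_iff_of_le hgt.le] at hslope

lemma eventually_differentiableAt_of_contDiffAt_two (hf : ContDiffAt ℝ 2 f x) :
    ∀ᶠ y in 𝓝 x, DifferentiableAt ℝ f y :=
  (hf.eventually (by simp)).mono fun _ hy ↦ hy.differentiableAt two_ne_zero

lemma hasDerivAt_deriv_of_contDiffAt_two (hf : ContDiffAt ℝ 2 f x) :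
    HasDerivAt (deriv f) (deriv^[2] f x) x :=
  ((hf.derivWithin (m := 1) le_rfl).differentiableAt one_ne_zero).hasDerivAt

lemma deriv2_exp_comp_of_deriv_eq_zero (hf : ContDiffAt ℝ 2 f x) (hfx : deriv f x = 0) :
    deriv^[2] (fun y ↦ exp (f y)) x = exp (f x) * deriv^[2] f x := by
  have hderiv : deriv (fun y ↦ exp (f y)) =ᶠ[𝓝 x] fun y ↦ exp (f y) * deriv f y :=
    (eventually_differentiableAt_of_contDiffAt_two hf).mono fun _ hy ↦ deriv_exp hy
  have hprod := (hf.differentiableAt two_ne_zero).hasDerivAt.exp.mul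
    (hasDerivAt_deriv_of_contDiffAt_two hf)
  rw [hfx, mul_zero, zero_add] at hprod
  exact hderiv.deriv_eq.trans hprod.deriv

lemma deriv2_log_comp (hf : ContDiffAt ℝ 2 f x) (hfx : f x ≠ 0) :
    deriv^[2] (fun y ↦ log (f y)) x = deriv^[2] f x / f x - (deriv f x / f x) ^ 2 := by
  have hderiv : deriv (fun y ↦ log (f y)) =ᶠ[𝓝 x] fun y ↦ deriv f y / f y := by
    filter_upwards [eventually_differentiableAt_of_contDiffAt_two hf,
      hf.continuousAt.eventually_ne hfx] with y hy hfy
    exact deriv.log hy hfy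
  have hquot := (hasDerivAt_deriv_of_contDiffAt_two hf).div
    (hf.differentiableAt two_ne_zero).hasDerivAt hfx
  refine (hderiv.deriv_eq.trans hquot.deriv).trans ?_
  field_simp

lemma contDiffAt_binEntropy {n : WithTop ℕ∞} (hx0 : x ≠ 0) (hx1 : x ≠ 1) :
    ContDiffAt ℝ n binEntropy x := by
  have hx1' : 1 - x ≠ 0 := sub_ne_zero.2 hx1.symm
  unfold binEntropy
  simp only [log_inv]
  fun_prop (disch := assumption)

end Calculus

section CorrelationFunction

variable (k : ℕ) {r α : ℝ}

lemma fN_one_sub (α : ℝ) : fN k (1 - α) = fN k α := by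
  simp only [fN, sub_sub_cancel, add_comm]

lemma contDiff_fN {n : WithTop ℕ∞} : ContDiff ℝ n (fN k) := by
  unfold fN
  fun_prop

lemma deriv_fN : deriv (fN k) =
    fun α ↦ (2 : ℝ) ^ ((1 : ℤ) - k) * (k * (α ^ (k - 1) - (1 - α) ^ (k - 1))) := by
  funext α
  have hpow := (hasDerivAt_pow k α).add (((hasDerivAt_id α).const_sub 1).pow k)
  refine ((hpow.const_mul _).const_add _).deriv.trans ?_
  simp only [id]
  ring

lemma deriv2_fN (α : ℝ) : deriv^[2] (fN k) α =
    (2 : ℝ) ^ ((1 : ℤ) - k) * (k * (k - 1) * (α ^ (k - 2) + (1 - α) ^ (k - 2))) := by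
  have hpow := (hasDerivAt_pow (k - 1) α).sub (((hasDerivAt_id α).const_sub 1).pow (k - 1))
  have hcast : (k : ℝ) * (k - 1 : ℕ) = k * (k - 1) := by cases k <;> simp
  change deriv (deriv (fN k)) α = _
  rw [deriv_fN, ← hcast]
  refine ((hpow.const_mul _).const_mul _).deriv.trans ?_
  simp only [id, Nat.sub_sub]
  ring

variable {k}

lemma one_sub_two_zpow_le_fN (hα : α ∈ Icc 0 1) : 1 - (2 : ℝ) ^ ((2 : ℤ) - k) ≤ fN k α := by
  have h0 := hα.1
  have h1 : 0 ≤ 1 - α := sub_nonneg.2 hα.2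
  exact le_add_of_nonneg_right (by positivity)

lemma fN_pos (hk : 2 < k) (hα : α ∈ Icc 0 1) : 0 < fN k α := by
  have hpow : (2 : ℝ) ^ ((2 : ℤ) - k) < 1 := zpow_lt_one_of_neg₀ one_lt_two (by lia)
  linarith [one_sub_two_zpow_le_fN (k := k) hα]

lemma mul_pred_mul_pow_le (hk : 74 ≤ k) : (k : ℝ) * (k - 1) * (9 / 10) ^ (k - 2) ≤ 11 / 4 := by
  induction k, hk using Nat.le_induction with
  | base => norm_num
  | succ n hn ih =>
    have hn' : (74 : ℝ) ≤ n := mod_cast hn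
    refine le_trans ?_ ih
    calc ((n + 1 : ℕ) : ℝ) * ((n + 1 : ℕ) - 1) * (9 / 10) ^ (n + 1 - 2)
        = n * (9 / 10) ^ (n - 2) * (9 / 10 * (n + 1)) := by
          rw [show n + 1 - 2 = n - 2 + 1 by lia]
          push_cast
          ring
      _ ≤ n * (9 / 10) ^ (n - 2) * (n - 1) := by
          gcongr
          linarith
      _ = n * (n - 1) * (9 / 10) ^ (n - 2) := by ring

lemma mul_two_zpow_le_log_two (hr : r ≤ (2 : ℝ) ^ ((k : ℤ) - 1) * log 2) :
    r * (2 : ℝ) ^ ((1 : ℤ) - k) ≤ log 2 := by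
  rwa [← neg_sub (k : ℤ), zpow_neg, mul_inv_le_iff₀' (by positivity)]

lemma mul_deriv2_fN_lt_four_mul_fN (hk : 74 ≤ k) (hr : r ≤ (2 : ℝ) ^ ((k : ℤ) - 1) * log 2)
    (hα : α ∈ Icc (1 / 10) (9 / 10)) : r * deriv^[2] (fN k) α < 4 * fN k α := by
  obtain ⟨hα0, hα1⟩ := hα
  have hk1 : (0 : ℝ) ≤ k - 1 := by
    rw [sub_nonneg, Nat.one_le_cast]
    lia
  have h1α : 0 ≤ 1 - α := by linarith
  have hpow : α ^ (k - 2) + (1 - α) ^ (k - 2) ≤ 2 * (9 / 10) ^ (k - 2) := by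
    rw [two_mul]
    gcongr
    linarith
  have hf : 1 - 1 / 100 ≤ fN k α := by
    refine le_trans ?_ (one_sub_two_zpow_le_fN ⟨by linarith, by linarith⟩)
    gcongr
    calc (2 : ℝ) ^ ((2 : ℤ) - k) ≤ 2 ^ (-7 : ℤ) := zpow_le_zpow_right₀ one_le_two (by lia)
      _ ≤ 1 / 100 := by norm_num
  calc r * deriv^[2] (fN k) α
      = r * (2 : ℝ) ^ ((1 : ℤ) - k) * (k * (k - 1) * (α ^ (k - 2) + (1 - α) ^ (k - 2))) := by
        rw [deriv2_fN, ← mul_assoc r]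
    _ ≤ log 2 * (k * (k - 1) * (2 * (9 / 10) ^ (k - 2))) := by
        gcongr
        exact mul_two_zpow_le_log_two hr
    _ = 2 * log 2 * (k * (k - 1) * (9 / 10) ^ (k - 2)) := by ring
    _ ≤ 2 * log 2 * (11 / 4) := by
        gcongr
        exact mul_pred_mul_pow_le hk
    _ < 4 * fN k α := by linarith [log_two_lt_d9]

end CorrelationFunction

/-- The logarithm of `gr k r` on the open unit interval, with the entropy factor expressed through
Mathlib's `Real.binEntropy`. -/
noncomputable def logGr (k : ℕ) (r α : ℝ) : ℝ :=
  r * log (fN k α) + binEntropy α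

section LogGr

variable {k : ℕ} {r α : ℝ}

lemma gr_eq_exp_logGr (hk : 2 < k) (hα : α ∈ Ioo 0 1) : gr k r α = exp (logGr k r α) := by
  rw [gr, rpow_def_of_pos (fN_pos hk (Ioo_subset_Icc_self hα)), rpow_def_of_pos hα.1,
    rpow_def_of_pos (sub_pos.2 hα.2), ← exp_add, ← exp_sub, logGr, binEntropy, log_inv, log_inv]
  ring_nf

lemma deriv_logGr_half (k : ℕ) (r : ℝ) : deriv (logGr k r) (1 / 2) = 0 := by
  refine deriv_eq_zero_of_reflection_invariant fun α ↦ ?_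
  rw [mul_one_div_cancel two_ne_zero, logGr, fN_one_sub, binEntropy_one_sub, logGr]

lemma contDiffAt_logGr {n : WithTop ℕ∞} (hk : 2 < k) (hα : α ∈ Ioo 0 1) :
    ContDiffAt ℝ n (logGr k r) α :=
  (contDiffAt_const.mul ((contDiff_fN k).contDiffAt.log
    (fN_pos hk (Ioo_subset_Icc_self hα)).ne')).add (contDiffAt_binEntropy hα.1.ne' hα.2.ne)

lemma deriv2_logGr (hk : 2 < k) (hα : α ∈ Ioo 0 1) : deriv^[2] (logGr k r) α =
    r * (deriv^[2] (fN k) α / fN k α - (deriv (fN k) α / fN k α) ^ 2) - 1 / (α * (1 - α)) := by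
  have hf := (fN_pos hk (Ioo_subset_Icc_self hα)).ne'
  have hlog : ContDiffAt ℝ 2 (fun β ↦ log (fN k β)) α := (contDiff_fN k).contDiffAt.log hf
  have hsum := iteratedDeriv_fun_add (n := 2) (contDiffAt_const (c := r) |>.mul hlog)
    (contDiffAt_binEntropy hα.1.ne' hα.2.ne)
  rw [iteratedDeriv_const_mul r hlog] at hsum
  simp only [iteratedDeriv_eq_iterate] at hsum
  rw [deriv2_log_comp (contDiff_fN k).contDiffAt hf, deriv2_binEntropy, neg_div,
    ← sub_eq_add_neg] at hsum
  exact hsum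

lemma deriv2_logGr_neg (hk : 74 ≤ k) (hr0 : 0 ≤ r) (hr : r ≤ (2 : ℝ) ^ ((k : ℤ) - 1) * log 2)
    (hα : α ∈ Icc (1 / 10) (9 / 10)) : deriv^[2] (logGr k r) α < 0 := by
  have hα01 : α ∈ Ioo 0 1 := ⟨by linarith [hα.1], by linarith [hα.2]⟩
  have hf : 0 < fN k α := fN_pos (by lia) (Ioo_subset_Icc_self hα01)
  have hcorrelation : r * (deriv^[2] (fN k) α / fN k α) < 4 := by
    rw [← mul_div_assoc, div_lt_iff₀ hf]
    exact mul_deriv2_fN_lt_four_mul_fN hk hr hα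
  have hentropy : 4 ≤ 1 / (α * (1 - α)) := by
    rw [le_div_iff₀ (mul_pos hα01.1 (sub_pos.2 hα01.2))]
    linarith [sq_nonneg (2 * α - 1)]
  have hsq : 0 ≤ r * (deriv (fN k) α / fN k α) ^ 2 := by positivity
  rw [deriv2_logGr (by lia) hα01]
  linarith

lemma strictConcaveOn_logGr (hk : 74 ≤ k) (hr0 : 0 ≤ r)
    (hr : r ≤ (2 : ℝ) ^ ((k : ℤ) - 1) * log 2) :
    StrictConcaveOn ℝ (Icc (1 / 10) (9 / 10)) (logGr k r) := by
  refine strictConcaveOn_of_deriv2_neg' (convex_Icc _ _) (fun α hα ↦ ?_)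
    fun α hα ↦ deriv2_logGr_neg hk hr0 hr hα
  have hα01 : α ∈ Ioo 0 1 := ⟨by linarith [hα.1], by linarith [hα.2]⟩
  exact (contDiffAt_logGr (n := 0) (by lia) hα01).continuousAt.continuousWithinAt

lemma deriv2_gr_half (hk : 2 < k) :
    deriv^[2] (gr k r) (1 / 2) = exp (logGr k r (1 / 2)) * deriv^[2] (logGr k r) (1 / 2) := by
  have hhalf : (1 / 2 : ℝ) ∈ Ioo 0 1 := by norm_num
  have hgr : gr k r =ᶠ[𝓝 (1 / 2)] fun α ↦ exp (logGr k r α) := by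
    filter_upwards [Ioo_mem_nhds hhalf.1 hhalf.2] with α hα using gr_eq_exp_logGr hk hα
  exact hgr.deriv.deriv_eq.trans
    (deriv2_exp_comp_of_deriv_eq_zero (contDiffAt_logGr hk hhalf) (deriv_logGr_half k r))

end LogGr

/-- For all `k ≥ 74` and `0 < r ≤ 2^(k-1) ln 2`, one has `g_r(α) < g_r(1/2)` for
all `α ∈ (1/2, 0.9]`, and `g_r''(1/2) < 0`. -/
theorem gr_near_half (k : ℕ) (hk : 74 ≤ k) (r : ℝ) (hr0 : 0 < r)
    (hr : r ≤ (2 : ℝ) ^ ((k : ℤ) - 1) * Real.log 2) :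
    (∀ α ∈ Set.Ioc (1 / 2 : ℝ) 0.9, gr k r α < gr k r (1 / 2)) ∧
      deriv (deriv (gr k r)) (1 / 2) < 0 := by
  have hk2 : 2 < k := by lia
  have hhalf : (1 / 2 : ℝ) ∈ Icc (1 / 10) (9 / 10) := by norm_num
  have hhalf01 : (1 / 2 : ℝ) ∈ Ioo 0 1 := by norm_num
  constructor
  · rintro α ⟨hα_gt, hα_le⟩
    norm_num at hα_le
    have hα : α ∈ Icc (1 / 10) (9 / 10) := ⟨by linarith, hα_le⟩
    have hcritical : HasDerivAt (logGr k r) 0 (1 / 2) := deriv_logGr_half k r ▸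
      ((contDiffAt_logGr (n := 1) hk2 hhalf01).differentiableAt one_ne_zero).hasDerivAt
    rw [gr_eq_exp_logGr hk2 ⟨by linarith, by linarith⟩, gr_eq_exp_logGr hk2 hhalf01, exp_lt_exp]
    exact lt_of_strictConcaveOn_of_hasDerivAt_zero (strictConcaveOn_logGr hk hr0.le hr)
      hhalf hα hα_gt.ne' hcritical
  · change deriv^[2] (gr k r) (1 / 2) < 0
    rw [deriv2_gr_half hk2]
    exact mul_neg_of_pos_of_neg (exp_pos _) (deriv2_logGr_neg hk hr0.le hr hhalf)
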